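/- arXiv:1503.03822 — 8 statements merged into one kernel-verified Lean document; each statement's English description precedes it below -/
import Mathlib

section
/- The right wedge is causally complete: for d ≥ 2, the double causal complement of W_R equals W_R, i.e. (W_R′)′ = W_R. -/
/-- The Minkowski inner product on `ℝ^(d+2)`:
`⟨x,y⟩ = x₀y₀ - x₁y₁ - ⋯ = 2 x₀ y₀ - ∑ᵢ xᵢ yᵢ`. -/
noncomputable def mink {d : ℕ} (x y : Fin (d + 2) → ℝ) : ℝ :=
  2 * x 0 * y 0 - ∑ i, x i * y i

/-- The right wedge `W_R = {x : x₁ > |x₀|}`. -/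
def WR {d : ℕ} : Set (Fin (d + 2) → ℝ) := {x | |x 0| < x 1}

/-- The causal complement of a set: all points spacelike separated from every point of the set. -/
noncomputable def ccomp {d : ℕ} (O : Set (Fin (d + 2) → ℝ)) : Set (Fin (d + 2) → ℝ) :=
  {y | ∀ x ∈ O, mink (y - x) (y - x) < 0}

theorem mink_self_eq {d : ℕ} (x : Fin (d + 2) → ℝ) :
    mink x x = x 0 ^ 2 - x 1 ^ 2 - ∑ i : Fin d, x i.succ.succ ^ 2 := by
  unfold mink
  rw [Fin.sum_univ_succ, Fin.sum_univ_succ]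
  have h : ∑ i : Fin d, x i.succ.succ * x i.succ.succ = ∑ i : Fin d, x i.succ.succ ^ 2 :=
    Finset.sum_congr rfl fun i _ => by ring
  rw [h, Fin.succ_zero_eq_one]
  ring

/-- The closed left wedge lies in the causal complement of the right wedge. -/
theorem left_subset {d : ℕ} (y : Fin (d + 2) → ℝ) (hy : y 1 ≤ -|y 0|) :
    y ∈ ccomp (WR (d := d)) := by
  intro x hx
  have hx' : |x 0| < x 1 := hx
  rw [mink_self_eq]
  have h0 : 0 ≤ ∑ i : Fin d, (y - x) i.succ.succ ^ 2 :=
    Finset.sum_nonneg fun i _ => sq_nonneg _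
  have h1 : (y - x) 0 ^ 2 < (y - x) 1 ^ 2 := by
    simp only [Pi.sub_apply]
    rw [abs_lt] at hx'
    have ha := le_abs_self (y 0)
    have hb := neg_abs_le (y 0)
    apply sq_lt_sq.mpr
    have : y 1 - x 1 < 0 := by linarith [abs_nonneg (y 0)]
    rw [abs_of_neg this, abs_lt]
    constructor <;> linarith
  linarith

theorem exists_left {d : ℕ} (z : Fin (d + 2) → ℝ) (a b : ℝ) (hb : b ≤ -|a|)
    (h : (z 0 - a) ^ 2 = (z 1 - b) ^ 2) : z ∉ ccomp (ccomp (WR (d := d))) := by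
  intro hz
  set y : Fin (d + 2) → ℝ := Fin.cons a (Fin.cons b fun i => z i.succ.succ) with hy
  have y0 : y 0 = a := rfl
  have y1 : y 1 = b := rfl
  have y2 : ∀ i : Fin d, y i.succ.succ = z i.succ.succ := fun i => rfl
  have := hz y (left_subset y (by rw [y0, y1]; exact hb))
  rw [mink_self_eq] at this
  simp [y0, y1, y2, h] at this

/-- The right wedge is causally complete: `(W_R')' = W_R`. -/
theorem right_wedge_causally_complete (d : ℕ) :
    ccomp (ccomp (WR (d := d))) = WR := by
  ext z
  constructor
  · intro hz
    by_contra hn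
    have hn' : z 1 ≤ |z 0| := not_lt.mp hn
    rcases le_total 0 (z 0) with h0 | h0
    · rw [abs_of_nonneg h0] at hn'
      refine exists_left z ((z 0 - z 1) / 2) ((z 1 - z 0) / 2) ?_ (by ring) hz
      rw [abs_of_nonneg (by linarith)]
      linarith
    · rw [abs_of_nonpos h0] at hn'
      refine exists_left z ((z 0 + z 1) / 2) ((z 0 + z 1) / 2) ?_ (by ring) hz
      rw [abs_of_nonpos (by linarith)]
      linarith
  · intro hz y hy
    have h := hy z hz
    have e : mink (z - y) (z - y) = mink (y - z) (y - z) := by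
      rw [mink_self_eq, mink_self_eq]
      simp only [Pi.sub_apply, sub_sq_comm (z _)]
    rw [e]
    exact h
end

section
/- If Λ is a proper Lorentz transformation of ℝ^d (d ≥ 2) and a ∈ ℝ^d are such that Λ(W_R) + a ⊆ W_R, then Λ(W_R) = W_R and a lies in the closure of W_R (i.e. a₁ ≥ |a₀|). -/
lemma wr_aux_lin {p q : ℝ} (h : ∀ t : ℝ, 0 ≤ t → 0 < t * p + q) : 0 ≤ p := by
  by_contra hp
  push Not at hp
  have h1 := h ((|q| + 1) / (-p)) (div_nonneg (by positivity) (by linarith))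
  have h2 : (|q| + 1) / (-p) * p = -(|q| + 1) := by
    have : p ≠ 0 := hp.ne
    field_simp
  have := le_abs_self q
  linarith

lemma wr_aux_zero {p q : ℝ} (h : ∀ t : ℝ, 0 < t → 0 < t * p + q) : 0 ≤ q := by
  have := wr_aux_lin (p := q) (q := p + q) (fun t ht => by
    have h1 := h (1 / (t + 1)) (by positivity)
    have h2 : t * q + (p + q) = (t + 1) * (1 / (t + 1) * p + q) := by
      field_simp
      ring
    rw [h2]
    positivity)
  exact this

lemma wr_aux_pos {p q u v : ℝ} (hp : 0 ≤ p) (hq : 0 ≤ q) (h : p * q = 1) :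
    (0 < v * p ∧ 0 < u * q) ↔ (0 < v ∧ 0 < u) := by
  have hp' : 0 < p := lt_of_le_of_ne hp (by rintro rfl; simp at h)
  have hq' : 0 < q := lt_of_le_of_ne hq (by rintro rfl; simp at h)
  rw [mul_pos_iff_of_pos_right hp', mul_pos_iff_of_pos_right hq']

lemma mink_split {d : ℕ} (x y : Fin (d + 2) → ℝ) :
    mink x y = x 0 * y 0 - x 1 * y 1 - ∑ i : Fin d, x i.succ.succ * y i.succ.succ := by
  unfold mink
  rw [Fin.sum_univ_succ, Fin.sum_univ_succ]
  simp only [Fin.succ_zero_eq_one]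
  ring

/-- if `Λ` is a proper Lorentz transformation and `a ∈ ℝ^d` are such that
`Λ(W_R) + a ⊆ W_R`, then `Λ(W_R) = W_R` and `a` lies in the closure of `W_R`
(i.e. `a₁ ≥ |a₀|`). -/
theorem wedge_inclusion_rigidity (d : ℕ)
    (Λ : (Fin (d + 2) → ℝ) →ₗ[ℝ] (Fin (d + 2) → ℝ))
    (hbij : Function.Bijective Λ)
    (hmink : ∀ x y, mink (Λ x) (Λ y) = mink x y)
    (hdet : LinearMap.det Λ = 1)
    (a : Fin (d + 2) → ℝ)
    (hsub : (fun w => Λ w + a) '' WR ⊆ WR) :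
    (⇑Λ) '' WR = WR ∧ |a 0| ≤ a 1 := by
  have hW : ∀ x : Fin (d + 2) → ℝ, |x 0| < x 1 → |Λ x 0 + a 0| < Λ x 1 + a 1 := by
    intro x hx
    exact hsub ⟨x, hx, rfl⟩
  have h01 : (0 : Fin (d + 2)) ≠ 1 := by simp
  -- the closed wedge goes into the closed wedge
  let w : Fin (d + 2) → ℝ := Pi.single 1 1
  have hw0 : w 0 = 0 := by simp [w]
  have hw1 : w 1 = 1 := by simp [w]
  have hcl : ∀ x : Fin (d + 2) → ℝ, |x 0| ≤ x 1 → |Λ x 0| ≤ Λ x 1 := by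
    intro x hx
    have key : ∀ t : ℝ, 0 ≤ t →
        |t * Λ x 0 + Λ w 0 + a 0| < t * Λ x 1 + Λ w 1 + a 1 := by
      intro t ht
      have := hW (t • x + w) (by
        simp only [Pi.add_apply, Pi.smul_apply, smul_eq_mul, hw0, hw1, add_zero, abs_mul,
          abs_of_nonneg ht]
        nlinarith [mul_le_mul_of_nonneg_left hx ht])
      simpa using this
    have h1 := wr_aux_lin (p := Λ x 1 - Λ x 0) (q := Λ w 1 + a 1 - (Λ w 0 + a 0))
      (fun t ht => by have := (abs_lt.1 (key t ht)).2; linarith)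
    have h2 := wr_aux_lin (p := Λ x 1 + Λ x 0) (q := Λ w 1 + a 1 + (Λ w 0 + a 0))
      (fun t ht => by have := (abs_lt.1 (key t ht)).1; linarith)
    exact abs_le.2 ⟨by linarith, by linarith⟩
  have ha : |a 0| ≤ a 1 := by
    have key : ∀ t : ℝ, 0 < t → |t * Λ w 0 + a 0| < t * Λ w 1 + a 1 := by
      intro t ht
      have := hW (t • w) (by simp [hw0, hw1, ht])
      simpa using this
    have h1 := wr_aux_zero (p := Λ w 1 - Λ w 0) (q := a 1 - a 0)
      (fun t ht => by have := (abs_lt.1 (key t ht)).2; linarith)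
    have h2 := wr_aux_zero (p := Λ w 1 + Λ w 0) (q := a 1 + a 0)
      (fun t ht => by have := (abs_lt.1 (key t ht)).1; linarith)
    exact abs_le.2 ⟨by linarith, by linarith⟩
  -- the edge goes into the edge
  have hedge : ∀ x : Fin (d + 2) → ℝ, x 0 = 0 → x 1 = 0 → Λ x 0 = 0 ∧ Λ x 1 = 0 := by
    intro x h0 h1
    have e1 := hcl x (by simp [h0, h1])
    have e2 := hcl (-x) (by simp [h0, h1])
    simp only [map_neg, Pi.neg_apply, abs_neg] at e2
    have e3 := abs_nonneg (Λ x 0)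
    exact ⟨abs_eq_zero.1 (by linarith), by linarith⟩
  -- null vectors of the closed wedge
  have hnull : ∀ x : Fin (d + 2) → ℝ, |x 0| ≤ x 1 → mink x x = 0 →
      Λ x 0 ^ 2 = Λ x 1 ^ 2 ∧ ∀ i : Fin d, Λ x i.succ.succ = 0 := by
    intro x hx hm
    have e1 := hcl x hx
    have e2 := hmink x x
    rw [hm, mink_split] at e2
    have e3 : 0 ≤ ∑ i : Fin d, Λ x i.succ.succ * Λ x i.succ.succ :=
      Finset.sum_nonneg fun i _ => mul_self_nonneg _
    have e4 : Λ x 0 ^ 2 ≤ Λ x 1 ^ 2 := sq_le_sq.2 (e1.trans (le_abs_self _))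
    have e5 : ∑ i : Fin d, Λ x i.succ.succ * Λ x i.succ.succ = 0 := by nlinarith
    refine ⟨by nlinarith, fun i => ?_⟩
    have := (Finset.sum_eq_zero_iff_of_nonneg
      (fun i _ => mul_self_nonneg (Λ x i.succ.succ))).1 e5 i (Finset.mem_univ i)
    exact mul_self_eq_zero.1 this
  let z : Fin (d + 2) → ℝ := Pi.single 0 1
  have hz0 : z 0 = 1 := by simp [z]
  have hz1 : z 1 = 0 := by simp [z]
  have hzs : ∀ i : Fin d, z i.succ.succ = 0 := fun i => by
    simp [z, Pi.single_apply, Fin.ext_iff]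
  have hws : ∀ i : Fin d, w i.succ.succ = 0 := fun i => by
    simp [w, Pi.single_apply, Fin.ext_iff]
  obtain ⟨hp, hps⟩ := hnull (w + z) (by simp [hz0, hz1, hw0, hw1])
    (by rw [mink_split]; simp [hz0, hz1, hw0, hw1, hzs, hws])
  obtain ⟨hq, hqs⟩ := hnull (w - z) (by simp [hz0, hz1, hw0, hw1])
    (by rw [mink_split]; simp [hz0, hz1, hw0, hw1, hzs, hws])
  have hp1 := hcl (w + z) (by simp [hz0, hz1, hw0, hw1])
  have hq1 := hcl (w - z) (by simp [hz0, hz1, hw0, hw1])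
  have hpq := hmink (w + z) (w - z)
  rw [mink_split, mink_split] at hpq
  simp only [hps, hqs] at hpq
  simp only [Pi.add_apply, Pi.sub_apply, hz0, hz1, hw0, hw1, hzs, hws] at hpq
  have hpq2 : Λ (w + z) 0 * Λ (w - z) 0 - Λ (w + z) 1 * Λ (w - z) 1 = -2 := by
    norm_num at hpq ⊢
    linarith
  -- coordinates of the image
  have hdec : ∀ x : Fin (d + 2) → ℝ, ∀ j : Fin (d + 2), j = 0 ∨ j = 1 →
      Λ x j = (x 1 + x 0) / 2 * Λ (w + z) j + (x 1 - x 0) / 2 * Λ (w - z) j := by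
    intro x j hj
    have e := hedge (x - ((x 1 + x 0) / 2) • (w + z) - ((x 1 - x 0) / 2) • (w - z))
      (by simp [hz0, hw0]; ring) (by simp [hz1, hw1]; ring)
    rw [map_sub, map_sub, map_smul, map_smul] at e
    simp only [Pi.sub_apply, Pi.smul_apply, smul_eq_mul] at e
    rcases hj with rfl | rfl
    · linarith [e.1]
    · linarith [e.2]
  clear hpq
  have hp2 : 0 ≤ Λ (w + z) 1 := (abs_nonneg _).trans hp1
  have hq2 : 0 ≤ Λ (w - z) 1 := (abs_nonneg _).trans hq1
  have hiff : ∀ x : Fin (d + 2) → ℝ, |Λ x 0| < Λ x 1 ↔ |x 0| < x 1 := by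
    intro x
    have d0 := hdec x 0 (Or.inl rfl)
    have d1 := hdec x 1 (Or.inr rfl)
    generalize Λ (w + z) 0 = p0 at *
    generalize Λ (w + z) 1 = p1 at *
    generalize Λ (w - z) 0 = q0 at *
    generalize Λ (w - z) 1 = q1 at *
    rw [abs_lt, abs_lt]
    rcases sq_eq_sq_iff_eq_or_eq_neg.1 hp with h | h <;>
      rcases sq_eq_sq_iff_eq_or_eq_neg.1 hq with h' | h' <;> subst h <;> subst h'
    · exfalso; linarith
    · have h := wr_aux_pos (u := x 1 - x 0) (v := x 1 + x 0) hp2 hq2 (by linarith)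
      have e1 : Λ x 1 + Λ x 0 = (x 1 + x 0) * p0 := by rw [d0, d1]; ring
      have e2 : Λ x 1 - Λ x 0 = (x 1 - x 0) * q1 := by rw [d0, d1]; ring
      rw [← e1, ← e2] at h
      constructor
      · rintro ⟨h1, h2⟩
        have := h.1 ⟨by linarith, by linarith⟩
        exact ⟨by linarith [this.1], by linarith [this.2]⟩
      · rintro ⟨h1, h2⟩
        have := h.2 ⟨by linarith, by linarith⟩
        exact ⟨by linarith [this.1], by linarith [this.2]⟩
    · have h := wr_aux_pos (u := x 1 - x 0) (v := x 1 + x 0) hp2 hq2 (by linarith)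
      have e1 : Λ x 1 - Λ x 0 = (x 1 + x 0) * p1 := by rw [d0, d1]; ring
      have e2 : Λ x 1 + Λ x 0 = (x 1 - x 0) * q0 := by rw [d0, d1]; ring
      rw [← e1, ← e2] at h
      constructor
      · rintro ⟨h1, h2⟩
        have := h.1 ⟨by linarith, by linarith⟩
        exact ⟨by linarith [this.1], by linarith [this.2]⟩
      · rintro ⟨h1, h2⟩
        have := h.2 ⟨by linarith, by linarith⟩
        exact ⟨by linarith [this.1], by linarith [this.2]⟩
    · exfalso; linarith
  refine ⟨Set.Subset.antisymm ?_ ?_, ha⟩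
  · rintro _ ⟨x, hx, rfl⟩
    exact (hiff x).2 hx
  · intro y hy
    obtain ⟨x, rfl⟩ := hbij.2 y
    exact ⟨x, (hiff x).1 hy, rfl⟩
end

section
/- Wedges causally separate double cones in two dimensions: let O₁ = (W_R + x) ∩ (W_L + y) and O₂ = (W_R + x′) ∩ (W_L + y′) be nonempty double cones in ℝ² (so y − x ∈ W_R and y′ − x′ ∈ W_R) such that every point of O₁ is spacelike separated from every point of O₂. Then there exists a ∈ ℝ² such that either O₁ ⊆ W_R + a and O₂ ⊆ W_L + a, or O₁ ⊆ W_L + a and O₂ ⊆ W_R + a. -/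
/-- The Minkowski inner product on two-dimensional Minkowski space. -/
noncomputable def mink2 (x y : Fin 2 → ℝ) : ℝ := x 0 * y 0 - x 1 * y 1

/-- The right wedge `W_R = {x : x₁ > |x₀|}` in `ℝ²`. -/
def WR2 : Set (Fin 2 → ℝ) := {x | |x 0| < x 1}

/-- The left wedge `W_L = -W_R` in `ℝ²`. -/
def WL2 : Set (Fin 2 → ℝ) := {x | -x ∈ WR2}

/-- The double cone `O_{x,y} = (W_R + x) ∩ (W_L + y)` in `ℝ²`. -/
def doubleCone (x y : Fin 2 → ℝ) : Set (Fin 2 → ℝ) :=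
  ((fun w => w + x) '' WR2) ∩ ((fun w => w + y) '' WL2)

theorem mem_WR_add (a p : Fin 2 → ℝ) :
    p ∈ (fun w => w + a) '' WR2 ↔ a 1 - a 0 < p 1 - p 0 ∧ a 1 + a 0 < p 1 + p 0 := by
  constructor
  · rintro ⟨w, hw, rfl⟩
    have h := abs_lt.1 (show |w 0| < w 1 from hw)
    simp only [Pi.add_apply]
    constructor <;> linarith [h.1, h.2]
  · rintro ⟨h, h'⟩
    refine ⟨p - a, ?_, by simp⟩
    show |(p - a) 0| < (p - a) 1
    simp only [Pi.sub_apply]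
    exact abs_lt.2 ⟨by linarith, by linarith⟩

theorem mem_WL_add (a p : Fin 2 → ℝ) :
    p ∈ (fun w => w + a) '' WL2 ↔ p 1 - p 0 < a 1 - a 0 ∧ p 1 + p 0 < a 1 + a 0 := by
  constructor
  · rintro ⟨w, hw, rfl⟩
    have h := abs_lt.1 (show |(-w) 0| < (-w) 1 from hw)
    simp only [Pi.neg_apply] at h
    simp only [Pi.add_apply]
    constructor <;> linarith [h.1, h.2]
  · rintro ⟨h, h'⟩
    refine ⟨p - a, ?_, by simp⟩
    show |(-(p - a)) 0| < (-(p - a)) 1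
    simp only [Pi.sub_apply, Pi.neg_apply]
    exact abs_lt.2 ⟨by linarith, by linarith⟩

theorem mem_dc (x y p : Fin 2 → ℝ) :
    p ∈ doubleCone x y ↔ (x 1 - x 0 < p 1 - p 0 ∧ x 1 + x 0 < p 1 + p 0) ∧
      (p 1 - p 0 < y 1 - y 0 ∧ p 1 + p 0 < y 1 + y 0) := by
  unfold doubleCone
  rw [Set.mem_inter_iff, mem_WR_add, mem_WL_add]

/-- Two open intervals without a common point are ordered. -/
theorem intervals_ordered {a b c d : ℝ} (hab : a < b) (hcd : c < d)
    (h : ∀ u, a < u → u < b → c < u → u < d → False) : b ≤ c ∨ d ≤ a := by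
  by_contra hn
  rw [not_or, not_le, not_le] at hn
  obtain ⟨u, hu, hu'⟩ := exists_between
    (show max a c < min b d from max_lt (lt_min hab hn.2) (lt_min hn.1 hcd))
  rw [max_lt_iff] at hu
  rw [lt_min_iff] at hu'
  exact h u hu.1 hu'.1 hu.2 hu'.2

/-- wedges causally separate double cones in two dimensions. If two nonempty
double cones `O₁ = O_{x,y}`, `O₂ = O_{x',y'}` are spacelike separated, then there is `a ∈ ℝ²`
such that one of them is contained in `W_R + a` and the other in `W_L + a`. -/
theorem wedges_causally_separate_double_cones
    (x y x' y' : Fin 2 → ℝ)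
    (h₁ : y - x ∈ WR2) (h₂ : y' - x' ∈ WR2)
    (hsep : ∀ p ∈ doubleCone x y, ∀ q ∈ doubleCone x' y', mink2 (p - q) (p - q) < 0) :
    ∃ a : Fin 2 → ℝ,
      (doubleCone x y ⊆ (fun w => w + a) '' WR2 ∧ doubleCone x' y' ⊆ (fun w => w + a) '' WL2) ∨
      (doubleCone x y ⊆ (fun w => w + a) '' WL2 ∧ doubleCone x' y' ⊆ (fun w => w + a) '' WR2) := by
  have e₁ := abs_lt.1 (show |(y - x) 0| < (y - x) 1 from h₁)
  have e₂ := abs_lt.1 (show |(y' - x') 0| < (y' - x') 1 from h₂)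
  simp only [Pi.sub_apply] at e₁ e₂
  have a₁ : x 1 - x 0 < y 1 - y 0 := by linarith [e₁.2]
  have b₁ : x 1 + x 0 < y 1 + y 0 := by linarith [e₁.1]
  have a₂ : x' 1 - x' 0 < y' 1 - y' 0 := by linarith [e₂.2]
  have b₂ : x' 1 + x' 0 < y' 1 + y' 0 := by linarith [e₂.1]
  have key : ∀ u v u' v' : ℝ, x 1 - x 0 < u → u < y 1 - y 0 → x 1 + x 0 < v → v < y 1 + y 0 →
      x' 1 - x' 0 < u' → u' < y' 1 - y' 0 → x' 1 + x' 0 < v' → v' < y' 1 + y' 0 →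
      0 < (u - u') * (v - v') := by
    intro u v u' v' k1 k2 k3 k4 k5 k6 k7 k8
    have h := hsep ![(v - u) / 2, (u + v) / 2]
      ((mem_dc _ _ _).2 (by
        simp only [Matrix.cons_val_zero, Matrix.cons_val_one]
        refine ⟨⟨?_, ?_⟩, ?_, ?_⟩ <;> linarith))
      ![(v' - u') / 2, (u' + v') / 2]
      ((mem_dc _ _ _).2 (by
        simp only [Matrix.cons_val_zero, Matrix.cons_val_one]
        refine ⟨⟨?_, ?_⟩, ?_, ?_⟩ <;> linarith))
    simp only [mink2, Pi.sub_apply, Matrix.cons_val_zero, Matrix.cons_val_one] at h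
    linarith
  obtain ⟨u, hu, hu'⟩ := exists_between a₁
  obtain ⟨v, hv, hv'⟩ := exists_between b₁
  obtain ⟨s, hs, hs'⟩ := exists_between a₂
  obtain ⟨t, ht, ht'⟩ := exists_between b₂
  have hU := intervals_ordered a₁ a₂ (fun w p q r z => by
    have := key w v w t p q hv hv' r z ht ht'
    simp at this)
  have hV := intervals_ordered b₁ b₂ (fun w p q r z => by
    have := key u w s w hu hu' p q hs hs' r z
    simp at this)
  have hk := key u v s t hu hu' hv hv' hs hs' ht ht'
  rcases hU with hU | hU <;> rcases hV with hV | hV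
  · refine ⟨y, Or.inr ⟨fun p hp => ?_, fun p hp => ?_⟩⟩
    · exact hp.2
    · rw [mem_dc] at hp
      rw [mem_WR_add]
      exact ⟨by linarith [hp.1.1], by linarith [hp.1.2]⟩
  · exact absurd hk (not_lt.2 (mul_nonpos_of_nonpos_of_nonneg (by linarith) (by linarith)))
  · exact absurd hk (not_lt.2 (mul_nonpos_of_nonneg_of_nonpos (by linarith) (by linarith)))
  · refine ⟨x, Or.inl ⟨fun p hp => ?_, fun p hp => ?_⟩⟩
    · exact hp.1
    · rw [mem_dc] at hp
      rw [mem_WL_add]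
      exact ⟨by linarith [hp.2.1], by linarith [hp.2.2]⟩
end

section
/- The Sinh-Gordon function is a scalar two-particle S-matrix: let 0 < b < π and define S(ζ) = (sinh ζ − i·sin b)/(sinh ζ + i·sin b). Then sinh ζ + i·sin b ≠ 0 for every ζ with 0 ≤ Im ζ ≤ π; S is analytic on the open strip S(0, π), continuous and bounded on the closed strip {0 ≤ Im ζ ≤ π}; for every real θ one has conj(S(θ)) = S(θ)⁻¹ = S(−θ) (in particular |S(θ)| = 1); and S(iπ − ζ) = S(ζ) for every ζ in the closed strip (crossing symmetry). -/
open Complex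

/-- The Sinh-Gordon two-particle S-matrix function
`S(ζ) = (sinh ζ - i sin b)/(sinh ζ + i sin b)`. -/
noncomputable def sinhGordonS (b : ℝ) (ζ : ℂ) : ℂ :=
  (Complex.sinh ζ - Complex.I * (Real.sin b : ℂ)) / (Complex.sinh ζ + Complex.I * (Real.sin b : ℂ))

lemma sinhGordon_im_nonneg (ζ : ℂ) (h0 : 0 ≤ ζ.im) (h1 : ζ.im ≤ Real.pi) :
    0 ≤ (Complex.sinh ζ).im := by
  have h : (Complex.sinh ζ).im = Real.cosh ζ.re * Real.sin ζ.im := by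
    conv_lhs => rw [← Complex.re_add_im ζ]
    rw [Complex.sinh_add, Complex.cosh_mul_I, Complex.sinh_mul_I, ← Complex.ofReal_sinh,
      ← Complex.ofReal_cosh, ← Complex.ofReal_sin, ← Complex.ofReal_cos]
    simp [-Complex.ofReal_sinh, -Complex.ofReal_cosh, -Complex.ofReal_sin, -Complex.ofReal_cos]
  rw [h]
  exact mul_nonneg (Real.cosh_pos _).le (Real.sin_nonneg_of_nonneg_of_le_pi h0 h1)

/-- for `0 < b < π`, the Sinh-Gordon function is a scalar two-particle S-matrix:
its denominator does not vanish on the closed strip `0 ≤ Im ζ ≤ π`, it is analytic on the open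
strip, continuous and bounded on the closed strip, satisfies unitarity and hermitian
analyticity `conj(S(θ)) = S(θ)⁻¹ = S(-θ)` (so `|S(θ)| = 1`) for real `θ`, and crossing
symmetry `S(iπ - ζ) = S(ζ)` on the closed strip. -/
theorem sinhGordon_is_S_matrix (b : ℝ) (hb0 : 0 < b) (hbπ : b < Real.pi) :
    (∀ ζ : ℂ, 0 ≤ ζ.im → ζ.im ≤ Real.pi →
        Complex.sinh ζ + Complex.I * (Real.sin b : ℂ) ≠ 0) ∧
    DifferentiableOn ℂ (sinhGordonS b) {ζ : ℂ | 0 < ζ.im ∧ ζ.im < Real.pi} ∧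
    ContinuousOn (sinhGordonS b) {ζ : ℂ | 0 ≤ ζ.im ∧ ζ.im ≤ Real.pi} ∧
    (∃ M : ℝ, ∀ ζ : ℂ, 0 ≤ ζ.im → ζ.im ≤ Real.pi → ‖sinhGordonS b ζ‖ ≤ M) ∧
    (∀ θ : ℝ,
        starRingEnd ℂ (sinhGordonS b θ) = (sinhGordonS b θ)⁻¹ ∧
        starRingEnd ℂ (sinhGordonS b θ) = sinhGordonS b (-θ) ∧
        ‖sinhGordonS b θ‖ = 1) ∧
    (∀ ζ : ℂ, 0 ≤ ζ.im → ζ.im ≤ Real.pi →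
        sinhGordonS b ((Real.pi : ℂ) * Complex.I - ζ) = sinhGordonS b ζ) := by
  have hs : 0 < Real.sin b := Real.sin_pos_of_pos_of_lt_pi hb0 hbπ
  have hne : ∀ ζ : ℂ, 0 ≤ ζ.im → ζ.im ≤ Real.pi →
      Complex.sinh ζ + Complex.I * (Real.sin b : ℂ) ≠ 0 := by
    intro ζ h0 h1 h
    have h2 := sinhGordon_im_nonneg ζ h0 h1
    have h3 := congrArg Complex.im h
    simp only [Complex.add_im, Complex.mul_im, Complex.I_re, Complex.I_im, Complex.ofReal_re,
      Complex.ofReal_im, Complex.zero_im] at h3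
    linarith
  have hconj : ∀ θ : ℝ, starRingEnd ℂ (sinhGordonS b θ) = (sinhGordonS b θ)⁻¹ := by
    intro θ
    unfold sinhGordonS
    rw [← Complex.ofReal_sinh, map_div₀, map_sub, map_add, map_mul, Complex.conj_ofReal,
      Complex.conj_ofReal, Complex.conj_I, inv_div]
    congr 1 <;> ring
  have hne' : ∀ θ : ℝ, sinhGordonS b θ ≠ 0 := by
    intro θ
    unfold sinhGordonS
    refine div_ne_zero ?_ (hne θ (by simp) (by simpa using Real.pi_pos.le))
    have h := hne ((-θ : ℝ) : ℂ) (by simp) (by simpa using Real.pi_pos.le)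
    intro h'
    apply h
    rw [Complex.ofReal_neg, Complex.sinh_neg]
    linear_combination -h'
  refine ⟨hne, ?_, ?_, ⟨1, ?_⟩, ?_, ?_⟩
  · unfold sinhGordonS
    refine DifferentiableOn.div ?_ ?_ ?_
    · exact (Complex.differentiable_sinh.sub_const _).differentiableOn
    · exact (Complex.differentiable_sinh.add_const _).differentiableOn
    · intro ζ h
      exact hne ζ h.1.le h.2.le
  · unfold sinhGordonS
    refine ContinuousOn.div ?_ ?_ ?_
    · exact (Complex.differentiable_sinh.sub_const _).continuous.continuousOn
    · exact (Complex.differentiable_sinh.add_const _).continuous.continuousOn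
    · intro ζ h
      exact hne ζ h.1 h.2
  · intro ζ h0 h1
    have h2 := sinhGordon_im_nonneg ζ h0 h1
    unfold sinhGordonS
    rw [norm_div]
    apply div_le_one_of_le₀ _ (norm_nonneg _)
    rw [← sq_le_sq₀ (norm_nonneg _) (norm_nonneg _), ← Complex.normSq_eq_norm_sq,
      ← Complex.normSq_eq_norm_sq, Complex.normSq_apply, Complex.normSq_apply]
    simp only [Complex.add_im, Complex.sub_im, Complex.add_re, Complex.sub_re, Complex.mul_im,
      Complex.mul_re, Complex.I_re, Complex.I_im, Complex.ofReal_re, Complex.ofReal_im]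
    nlinarith [mul_nonneg h2 hs.le]
  · intro θ
    refine ⟨hconj θ, ?_, ?_⟩
    · rw [hconj]
      unfold sinhGordonS
      rw [inv_div, Complex.sinh_neg, ← neg_div_neg_eq]
      congr 1 <;> ring
    · have h := Complex.mul_conj (sinhGordonS b θ)
      rw [hconj, mul_inv_cancel₀ (hne' θ), Complex.normSq_eq_norm_sq] at h
      have h' : ‖sinhGordonS b θ‖ ^ 2 = 1 := by exact_mod_cast h.symm
      exact (pow_eq_one_iff_of_nonneg (norm_nonneg _) two_ne_zero).1 h'
  · intro ζ _ _
    unfold sinhGordonS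
    have h : Complex.sinh ((Real.pi : ℂ) * Complex.I - ζ) = Complex.sinh ζ := by
      rw [Complex.sinh_sub, Complex.sinh_mul_I, Complex.cosh_mul_I, Complex.sin_pi, Complex.cos_pi]
      ring
    rw [h]
end

section
/- The function associated with noncommutative Minkowski space is a scalar two-particle S-matrix: let κ > 0 and m > 0 and define S(ζ) = exp(i·κ·m²·sinh ζ). Then S is entire; |S(ζ)| ≤ 1 for every ζ with 0 ≤ Im ζ ≤ π; for every real θ one has conj(S(θ)) = S(θ)⁻¹ = S(−θ) (in particular |S(θ)| = 1); and S(iπ − ζ) = S(ζ) for every ζ ∈ ℂ (crossing symmetry). -/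
open Complex

/-- The S-matrix of noncommutative Minkowski space, `S(ζ) = exp(i κ m² sinh ζ)`. -/
noncomputable def ncS (κ m : ℝ) (ζ : ℂ) : ℂ :=
  Complex.exp (Complex.I * (κ : ℂ) * (m : ℂ) ^ 2 * Complex.sinh ζ)

/-- for `κ > 0`, `m > 0`, the function `S(ζ) = exp(i κ m² sinh ζ)` is a scalar
two-particle S-matrix: it is entire, satisfies `|S(ζ)| ≤ 1` on the closed strip
`0 ≤ Im ζ ≤ π`, satisfies `conj(S(θ)) = S(θ)⁻¹ = S(-θ)` (so `|S(θ)| = 1`) for real `θ`, and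
crossing symmetry `S(iπ - ζ) = S(ζ)` for all `ζ ∈ ℂ`. -/
theorem ncS_is_S_matrix (κ m : ℝ) (hκ : 0 < κ) (hm : 0 < m) :
    Differentiable ℂ (ncS κ m) ∧
    (∀ ζ : ℂ, 0 ≤ ζ.im → ζ.im ≤ Real.pi → ‖ncS κ m ζ‖ ≤ 1) ∧
    (∀ θ : ℝ,
        starRingEnd ℂ (ncS κ m θ) = (ncS κ m θ)⁻¹ ∧
        starRingEnd ℂ (ncS κ m θ) = ncS κ m (-θ) ∧
        ‖ncS κ m θ‖ = 1) ∧
    (∀ ζ : ℂ, ncS κ m ((Real.pi : ℂ) * Complex.I - ζ) = ncS κ m ζ) := by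
  have him : ∀ ζ : ℂ, (Complex.sinh ζ).im = Real.cosh ζ.re * Real.sin ζ.im := by
    intro ζ
    conv_lhs => rw [← Complex.re_add_im ζ]
    rw [Complex.sinh_add, Complex.sinh_mul_I, Complex.cosh_mul_I, ← Complex.ofReal_sinh,
      ← Complex.ofReal_cosh, ← Complex.ofReal_sin, ← Complex.ofReal_cos]
    simp [Complex.sin_ofReal_re]
  have hnorm : ∀ ζ : ℂ, ‖ncS κ m ζ‖ =
      Real.exp (-(κ * m ^ 2 * (Real.cosh ζ.re * Real.sin ζ.im))) := by
    intro ζ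
    rw [ncS, Complex.norm_exp, ← him]
    have h : Complex.I * (κ : ℂ) * (m : ℂ) ^ 2 * Complex.sinh ζ =
        ((κ * m ^ 2 : ℝ) : ℂ) * (Complex.I * Complex.sinh ζ) := by
      push_cast
      ring
    rw [h, Complex.re_ofReal_mul, Complex.I_mul_re]
    congr 1
    ring
  have hconj : ∀ θ : ℝ, starRingEnd ℂ (ncS κ m θ) = ncS κ m (-θ) := by
    intro θ
    rw [ncS, ncS, ← Complex.exp_conj, Complex.sinh_neg]
    congr 1
    simp [← Complex.sinh_conj]
  refine ⟨?_, ?_, ?_, ?_⟩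
  · unfold ncS
    fun_prop
  · intro ζ h0 h1
    rw [hnorm, Real.exp_le_one_iff, neg_nonpos]
    have h2 := Real.sin_nonneg_of_nonneg_of_le_pi h0 h1
    have h3 := Real.cosh_pos ζ.re
    positivity
  · intro θ
    refine ⟨?_, hconj θ, ?_⟩
    · rw [hconj, ncS, ncS, Complex.sinh_neg, ← Complex.exp_neg, mul_neg]
    · rw [hnorm]
      simp
  · intro ζ
    rw [ncS, ncS, Complex.sinh_sub, Complex.sinh_mul_I, Complex.cosh_mul_I]
    simp
end

section
/- The S-matrix S(ζ) = exp(i·κ·m²·sinh ζ) with κ > 0, m > 0 is not regular: for every ε > 0, the function ζ ↦ exp(i·κ·m²·sinh ζ) is unbounded on the strip S(−ε, π + ε) = {ζ ∈ ℂ : −ε < Im ζ < π + ε}, i.e. for every M > 0 there exists ζ in this strip with |exp(i·κ·m²·sinh ζ)| > M. -/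
open Complex

/-- the S-matrix `S(ζ) = exp(i κ m² sinh ζ)` with `κ > 0`, `m > 0` is not
regular: for every `ε > 0` it is unbounded on the strip `S(-ε, π + ε)`, i.e. for every
`M > 0` there exists `ζ` in that strip with `|S(ζ)| > M`. -/
theorem ncS_not_regular (κ m : ℝ) (hκ : 0 < κ) (hm : 0 < m)
    (ε : ℝ) (hε : 0 < ε) (M : ℝ) (hM : 0 < M) :
    ∃ ζ : ℂ, -ε < ζ.im ∧ ζ.im < Real.pi + ε ∧ M < ‖ncS κ m ζ‖ := by
  have hpi := Real.pi_pos
  obtain ⟨δ, hδ0, hδε, hδπ⟩ : ∃ δ : ℝ, 0 < δ ∧ δ < ε ∧ δ < Real.pi := by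
    obtain ⟨δ, h0, h1⟩ := exists_between (lt_min hε hpi)
    exact ⟨δ, h0, lt_of_lt_of_le h1 (min_le_left _ _), lt_of_lt_of_le h1 (min_le_right _ _)⟩
  have hs : 0 < Real.sin δ := Real.sin_pos_of_pos_of_lt_pi hδ0 hδπ
  have hc : 0 < κ * m ^ 2 * Real.sin δ := by positivity
  set c := κ * m ^ 2 * Real.sin δ with hcdef
  set t : ℝ := M / c with ht
  have ht0 : 0 < t := div_pos hM hc
  have hcosh : t ≤ Real.cosh t :=
    (Real.self_le_sinh_iff.mpr ht0.le).trans (Real.sinh_lt_cosh t).le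
  have hre : (Complex.I * (κ : ℂ) * (m : ℂ) ^ 2 *
      Complex.sinh ((t : ℂ) + ((-δ : ℝ) : ℂ) * Complex.I)).re = c * Real.cosh t := by
    rw [Complex.sinh_add, Complex.sinh_mul_I, Complex.cosh_mul_I, ← Complex.ofReal_sinh,
      ← Complex.ofReal_cosh, ← Complex.ofReal_sin, ← Complex.ofReal_cos,
      Real.sin_neg, Real.cos_neg]
    have : Complex.I * (κ : ℂ) * (m : ℂ) ^ 2 * ((Real.sinh t : ℂ) * (Real.cos δ : ℂ) +
        (Real.cosh t : ℂ) * (((-Real.sin δ : ℝ) : ℂ) * Complex.I)) =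
        ((c * Real.cosh t : ℝ) : ℂ) +
          ((κ * m ^ 2 * Real.sinh t * Real.cos δ : ℝ) : ℂ) * Complex.I := by
      rw [hcdef]
      push_cast
      linear_combination (-(κ : ℂ) * m ^ 2 * Complex.cosh t * Complex.sin δ) * Complex.I_sq
    rw [this, Complex.add_re, Complex.re_ofReal_mul, Complex.ofReal_re, Complex.I_re]
    ring
  refine ⟨(t : ℂ) + ((-δ : ℝ) : ℂ) * Complex.I, ?_, ?_, ?_⟩
  · simp; linarith
  · simp; linarith
  · rw [ncS, Complex.norm_exp, hre]
    have h1 := Real.add_one_le_exp (c * Real.cosh t)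
    have h2 : c * t ≤ c * Real.cosh t := mul_le_mul_of_nonneg_left hcosh hc.le
    have h3 : c * t = M := by rw [ht]; field_simp
    linarith
end

section
/- Classification of admissible deformation matrices in dimension d ≠ 4: let d ≥ 2 with d ≠ 4, and let Q be a linear map of ℝ^d that is skew-symmetric with respect to the Minkowski inner product, i.e. ⟨Qx, y⟩ = −⟨x, Qy⟩ for all x, y. Then Q satisfies the three admissibility conditions (i) ΛQΛ⁻¹ = Q for every proper orthochronous Lorentz transformation Λ with Λ(W_R) = W_R, (ii) ΛQΛ⁻¹ = −Q for every proper orthochronous Lorentz transformation Λ with Λ(W_R) = −W_R, and jQj = Q for the reflection j(x) = (−x₀, −x₁, x₂, ..., x_{d−1}), and (iii) Q maps the closed forward light cone {x : x₀ ≥ 0 and ⟨x, x⟩ ≥ 0} into the closed right wedge {x : x₁ ≥ |x₀|} — if and only if there exists κ ≥ 0 such that (Qx)₀ = κ·x₁, (Qx)₁ = κ·x₀, and (Qx)ᵢ = 0 for 2 ≤ i ≤ d − 1, for all x ∈ ℝ^d. -/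
/-- The reflection `j(x) = (-x₀, -x₁, x₂, ..., x_{d-1})` about the edge of the right wedge. -/
def jrefl {d : ℕ} (x : Fin (d + 2) → ℝ) : Fin (d + 2) → ℝ :=
  fun i => if i = 0 then -x 0 else if i = 1 then -x 1 else x i

theorem mink_single_right {d : ℕ} (x : Fin (d + 2) → ℝ) (i : Fin (d + 2)) (c : ℝ) :
    mink x (Pi.single i c) = if i = 0 then x 0 * c else - (x i * c) := by
  unfold mink
  have h : ∑ k, x k * (Pi.single i c : Fin (d + 2) → ℝ) k = x i * c := by
    rw [Finset.sum_eq_single i]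
    · simp
    · intro b _ hb
      simp [Pi.single_eq_of_ne hb]
    · simp
  rw [h]
  split_ifs with h0
  · subst h0
    simp
    ring
  · rw [Pi.single_eq_of_ne (Ne.symm h0)]
    ring

theorem mink_symm {d : ℕ} (x y : Fin (d + 2) → ℝ) : mink x y = mink y x := by
  unfold mink
  have h : ∑ i, x i * y i = ∑ i, y i * x i := Finset.sum_congr rfl fun i _ => mul_comm _ _
  rw [h]
  ring

theorem mink_single_left {d : ℕ} (x : Fin (d + 2) → ℝ) (i : Fin (d + 2)) (c : ℝ) :
    mink (Pi.single i c) x = if i = 0 then x 0 * c else - (x i * c) := by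
  rw [mink_symm, mink_single_right]

theorem line_in_wedge {p q v w : ℝ} (h : ∀ t : ℝ, |p + t * v| < q + t * w) : v = 0 ∧ w = 0 := by
  have hw : w = 0 := by
    by_contra hw
    have h1 := h (-q / w)
    have h2 := abs_nonneg (p + -q / w * v)
    have h3 : q + -q / w * w = 0 := by field_simp; ring
    linarith
  refine ⟨?_, hw⟩
  by_contra hv
  have h1 := h ((q - p) / v)
  have h3 : (q - p) / v * v = q - p := by field_simp
  rw [h3, hw] at h1
  have := le_abs_self (p + (q - p))
  linarith

theorem commute_aux {d : ℕ} (Q L : (Fin (d + 2) → ℝ) →ₗ[ℝ] (Fin (d + 2) → ℝ)) (κ s : ℝ)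
    (hQ : ∀ x : Fin (d + 2) → ℝ, Q x 0 = κ * x 1 ∧ Q x 1 = κ * x 0 ∧
        ∀ i : Fin (d + 2), i ≠ 0 → i ≠ 1 → Q x i = 0)
    (hbij : Function.Bijective L) (hL : ∀ x y, mink (L x) (L y) = mink x y)
    (h00 : 0 < L (Pi.single 0 1) 0) (hs : s * s = 1)
    (hW : ∀ x : Fin (d + 2) → ℝ, |x 0| < x 1 ↔ |s * L x 0| < s * L x 1) (x : Fin (d + 2) → ℝ) :
    L (Q x) = s • Q (L x) := by
  have hs0 : s ≠ 0 := by
    rintro rfl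
    simp at hs
  have h10 : (1 : Fin (d + 2)) ≠ 0 := by simp
  -- the edge is preserved
  have hE : ∀ v : Fin (d + 2) → ℝ, v 0 = 0 → v 1 = 0 → L v 0 = 0 ∧ L v 1 = 0 := by
    intro v hv0 hv1
    have key := line_in_wedge (p := s * L (Pi.single 1 1) 0) (q := s * L (Pi.single 1 1) 1)
      (v := s * L v 0) (w := s * L v 1) (by
        intro t
        have := (hW (Pi.single 1 1 + t • v)).1 (by simp [hv0, hv1])
        simp only [map_add, map_smul, Pi.add_apply, Pi.smul_apply, smul_eq_mul] at this
        convert this using 2 <;> ring)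
    exact ⟨(mul_eq_zero.1 key.1).resolve_left hs0, (mul_eq_zero.1 key.2).resolve_left hs0⟩
  have hE' : ∀ v : Fin (d + 2) → ℝ, L v 0 = 0 → L v 1 = 0 → v 0 = 0 ∧ v 1 = 0 := by
    intro v hv0 hv1
    obtain ⟨z, hz⟩ := hbij.2 (Pi.single 1 s)
    exact line_in_wedge (p := z 0) (q := z 1) (v := v 0) (w := v 1) (by
        intro t
        have := (hW (z + t • v)).2 (by simp [hz, hv0, hv1, hs])
        simpa using this)
  have hi : ∀ (k i : Fin (d + 2)), (k = 0 ∨ k = 1) → i ≠ 0 → i ≠ 1 →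
      L (Pi.single k 1) i = 0 := by
    intro k i hk hi0 hi1
    obtain ⟨v, hv⟩ := hbij.2 (Pi.single i 1)
    have hv' := hE' v (by rw [hv]; exact Pi.single_eq_of_ne (Ne.symm hi0) _)
      (by rw [hv]; exact Pi.single_eq_of_ne (Ne.symm hi1) _)
    have h := hL (Pi.single k 1) v
    rw [hv, mink_single_right, mink_single_left, if_neg hi0] at h
    rcases hk with rfl | rfl
    · simp [hv'.1] at h
      exact h
    · simp [hv'.2] at h
      exact h
  have hdec : ∀ k : Fin (d + 2), (k = 0 ∨ k = 1) → L (Pi.single k 1) =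
      Pi.single 0 (L (Pi.single k 1) 0) + Pi.single 1 (L (Pi.single k 1) 1) := by
    intro k hk
    funext i
    by_cases hi0 : i = 0
    · subst hi0; simp
    by_cases hi1 : i = 1
    · subst hi1; simp
    rw [hi k i hk hi0 hi1]
    simp [hi0, hi1]
  have hm : ∀ a b a' b' : ℝ, mink (Pi.single 0 a + Pi.single 1 b : Fin (d + 2) → ℝ)
      (Pi.single 0 a' + Pi.single 1 b') = a * a' - b * b' := by
    intro a b a' b'
    have : ∀ u : Fin (d + 2) → ℝ, mink u (Pi.single 0 a' + Pi.single 1 b')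
        = mink u (Pi.single 0 a') + mink u (Pi.single 1 b') := by
      intro u
      unfold mink
      simp only [Pi.add_apply, mul_add, Finset.sum_add_distrib]
      ring
    rw [this, mink_single_right, mink_single_right]
    simp
    ring
  set a := L (Pi.single 0 1) 0 with ha
  set b := L (Pi.single 0 1) 1 with hb
  set b' := L (Pi.single 1 1) 0 with hb'
  set a' := L (Pi.single 1 1) 1 with ha'
  have e0 := hdec 0 (Or.inl rfl)
  have e1 := hdec 1 (Or.inr rfl)
  rw [← ha, ← hb] at e0
  rw [← ha', ← hb'] at e1
  have m00 := hL (Pi.single 0 1) (Pi.single 0 1)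
  have m01 := hL (Pi.single 0 1) (Pi.single 1 1)
  have m11 := hL (Pi.single 1 1) (Pi.single 1 1)
  rw [e0, hm, mink_single_right] at m00
  rw [e0, e1, hm, mink_single_right] at m01
  rw [e1, hm, mink_single_right] at m11
  simp at m00 m01 m11
  have hpos : 0 < s * a' := by
    have := (hW (Pi.single 1 1)).1 (by simp)
    exact lt_of_le_of_lt (abs_nonneg _) this
  have haa : (s * a') ^ 2 = a ^ 2 := by
    have h1 : a' ^ 2 = a ^ 2 := by
      have h2 : (a * b') ^ 2 = (b * a') ^ 2 := by rw [show a * b' = b * a' by linarith]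
      have h3 : b' ^ 2 = a' ^ 2 - 1 := by linarith
      have h4 : b ^ 2 = a ^ 2 - 1 := by linarith
      rw [mul_pow, mul_pow, h3, h4] at h2
      linarith
    rw [mul_pow, h1, sq s, hs, one_mul]
  have haa' : s * a' = a := by
    rcases sq_eq_sq_iff_eq_or_eq_neg.1 haa with h | h
    · exact h
    · linarith
  have hA : a' = s * a := by rw [← haa', ← mul_assoc, hs, one_mul]
  have hB : b' = s * b := by
    have : a * (b' - s * b) = 0 := by
      rw [hA] at m01
      linarith
    rcases mul_eq_zero.1 this with h | h
    · linarith
    · linarith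
  have hQx : ∀ y, Q y = Pi.single 0 (κ * y 1) + Pi.single 1 (κ * y 0) := by
    intro y
    obtain ⟨q0, q1, q2⟩ := hQ y
    funext i
    by_cases hi0 : i = 0
    · subst hi0; simp [q0]
    by_cases hi1 : i = 1
    · subst hi1; simp [q1]
    rw [q2 i hi0 hi1]
    simp [hi0, hi1]
  have hsm : ∀ (k : Fin (d + 2)) (c : ℝ), L (Pi.single k c) = c • L (Pi.single k 1) := by
    intro k c
    rw [← map_smul, ← Pi.single_smul]
    simp
  have hrest := hE (x - Pi.single 0 (x 0) - Pi.single 1 (x 1)) (by simp) (by simp)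
  rw [map_sub, map_sub, hsm, hsm 1, e0, e1] at hrest
  simp at hrest
  have x0 : L x 0 = x 0 * a + x 1 * b' := by linarith [hrest.1]
  have x1 : L x 1 = x 0 * b + x 1 * a' := by linarith [hrest.2]
  rw [hQx x, hQx (L x), map_add, hsm, hsm 1, e0, e1, x0, x1, hA, hB]
  have t1 : s * (κ * (x 0 * b + x 1 * (s * a))) = κ * (s * x 0 * b + s * s * x 1 * a) := by ring
  have t2 : s * (κ * (x 0 * a + x 1 * (s * b))) = κ * (s * x 0 * a + s * s * x 1 * b) := by ring
  rw [hs] at t1 t2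
  funext i
  by_cases hi0 : i = 0
  · subst hi0; simp; rw [t1]; ring
  by_cases hi1 : i = 1
  · subst hi1; simp; rw [t2]; ring
  simp [hi0, hi1]

/-- Sign flip of the coordinates `i` and `l`. -/
noncomputable def flipMap {d : ℕ} (i l : Fin (d + 2)) :
    (Fin (d + 2) → ℝ) →ₗ[ℝ] (Fin (d + 2) → ℝ) :=
  Matrix.toLin' (Matrix.diagonal fun m => (if m = i then -1 else 1) * (if m = l then -1 else 1))

theorem flipMap_apply {d : ℕ} (i l m : Fin (d + 2)) (x : Fin (d + 2) → ℝ) :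
    flipMap i l x m = (if m = i then -1 else 1) * (if m = l then -1 else 1) * x m := by
  simp [flipMap, Matrix.mulVec_diagonal]

theorem flipMap_det {d : ℕ} (i l : Fin (d + 2)) : LinearMap.det (flipMap i l) = 1 := by
  rw [flipMap, LinearMap.det_toLin', Matrix.det_diagonal, Finset.prod_mul_distrib]
  simp

theorem flipMap_flipMap {d : ℕ} (i l : Fin (d + 2)) (x : Fin (d + 2) → ℝ) :
    flipMap i l (flipMap i l x) = x := by
  funext m
  rw [flipMap_apply, flipMap_apply]
  split_ifs <;> ring

theorem flipMap_mink {d : ℕ} (i l : Fin (d + 2)) (x y : Fin (d + 2) → ℝ) :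
    mink (flipMap i l x) (flipMap i l y) = mink x y := by
  have h : ∀ m, flipMap i l x m * flipMap i l y m = x m * y m := by
    intro m
    rw [flipMap_apply, flipMap_apply]
    split_ifs <;> ring
  unfold mink
  rw [mul_assoc, h 0, Finset.sum_congr rfl fun m _ => h m]
  ring

/-- classification of admissible deformation matrices in dimension `d ≠ 4`
(here the dimension is `d + 2`, so we require `d ≠ 2`): a Minkowski-skew-symmetric linear map
`Q` satisfies the admissibility conditions (i) `ΛQΛ⁻¹ = Q` for proper orthochronous `Λ` with
`Λ(W_R) = W_R`, (ii) `ΛQΛ⁻¹ = -Q` for proper orthochronous `Λ` with `Λ(W_R) = -W_R` and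
`jQj = Q`, (iii) `Q` maps the closed forward light cone into the closed right wedge — if and
only if `Q` has the standard form `Qx = κ(x₁, x₀, 0, ..., 0)` with `κ ≥ 0`. -/
theorem admissible_Q_classification (d : ℕ) (hd : d ≠ 2)
    (Q : (Fin (d + 2) → ℝ) →ₗ[ℝ] (Fin (d + 2) → ℝ))
    (hskew : ∀ x y, mink (Q x) y = - mink x (Q y)) :
    ((∀ Λ : (Fin (d + 2) → ℝ) →ₗ[ℝ] (Fin (d + 2) → ℝ),
        Function.Bijective Λ → (∀ x y, mink (Λ x) (Λ y) = mink x y) →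
        LinearMap.det Λ = 1 → 0 < Λ (Pi.single 0 1) 0 →
        (⇑Λ) '' WR = WR → ∀ x, Λ (Q x) = Q (Λ x)) ∧
     (∀ Λ : (Fin (d + 2) → ℝ) →ₗ[ℝ] (Fin (d + 2) → ℝ),
        Function.Bijective Λ → (∀ x y, mink (Λ x) (Λ y) = mink x y) →
        LinearMap.det Λ = 1 → 0 < Λ (Pi.single 0 1) 0 →
        (⇑Λ) '' WR = {x | -x ∈ WR} → ∀ x, Λ (Q x) = - Q (Λ x)) ∧
     (∀ x, jrefl (Q (jrefl x)) = Q x) ∧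
     (∀ x : Fin (d + 2) → ℝ, 0 ≤ x 0 → 0 ≤ mink x x → |Q x 0| ≤ Q x 1))
    ↔ (∃ κ : ℝ, 0 ≤ κ ∧ ∀ x : Fin (d + 2) → ℝ,
        Q x 0 = κ * x 1 ∧ Q x 1 = κ * x 0 ∧
        ∀ i : Fin (d + 2), i ≠ 0 → i ≠ 1 → Q x i = 0) := by
  have h10 : (1 : Fin (d + 2)) ≠ 0 := by simp
  constructor
  · rintro ⟨h1, -, hj, h3⟩
    have sk : ∀ i k : Fin (d + 2), (if k = 0 then Q (Pi.single i 1) 0 else - Q (Pi.single i 1) k)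
        = - (if i = 0 then Q (Pi.single k 1) 0 else - Q (Pi.single k 1) i) := by
      intro i k
      have := hskew (Pi.single i 1) (Pi.single k 1)
      rw [mink_single_right, mink_single_left] at this
      simpa using this
    have hj01 : ∀ k i : Fin (d + 2), (k = 0 ∨ k = 1) → i ≠ 0 → i ≠ 1 →
        Q (Pi.single k 1) i = 0 := by
      intro k i hk hi0 hi1
      have e : jrefl (Pi.single k 1 : Fin (d + 2) → ℝ) = - Pi.single k 1 := by
        funext m
        unfold jrefl
        by_cases hm0 : m = 0
        · subst hm0; simp
        by_cases hm1 : m = 1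
        · subst hm1; simp
        rcases hk with rfl | rfl <;> simp [hm0, hm1]
      have h := congrFun (hj (Pi.single k 1)) i
      rw [e, map_neg] at h
      simp only [jrefl, if_neg hi0, if_neg hi1, Pi.neg_apply] at h
      linarith
    have q00 : Q (Pi.single 0 1) 0 = 0 := by
      have := sk 0 0
      simp at this
      linarith
    have q11 : Q (Pi.single 1 1) 1 = 0 := by
      have := sk 1 1
      simp at this
      linarith
    have q10 : Q (Pi.single 1 1) 0 = Q (Pi.single 0 1) 1 := by
      have := sk 1 0
      simp at this
      linarith
    have qi : ∀ i : Fin (d + 2), i ≠ 0 → i ≠ 1 → Q (Pi.single i 1) = 0 := by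
      intro i hi0 hi1
      funext k
      simp only [Pi.zero_apply]
      by_cases hk0 : k = 0
      · subst hk0
        have := sk i 0
        rw [if_pos rfl, if_neg hi0, hj01 0 i (Or.inl rfl) hi0 hi1] at this
        simpa using this
      by_cases hk1 : k = 1
      · subst hk1
        have := sk i 1
        rw [if_neg h10, if_neg hi0, hj01 1 i (Or.inr rfl) hi0 hi1] at this
        simpa using this
      by_cases hik : i = k
      · subst hik
        have := sk i i
        rw [if_neg hi0] at this
        linarith
      have hd3 : 3 ≤ d := by
        by_contra hlt
        have hi0' : (i : ℕ) ≠ 0 := fun h => hi0 (Fin.ext h)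
        have hi1' : (i : ℕ) ≠ 1 := fun h => hi1 (Fin.ext (by simpa using h))
        have hk0' : (k : ℕ) ≠ 0 := fun h => hk0 (Fin.ext h)
        have hk1' : (k : ℕ) ≠ 1 := fun h => hk1 (Fin.ext (by simpa using h))
        have hik' : (i : ℕ) ≠ k := fun h => hik (Fin.ext h)
        have := i.2
        have := k.2
        omega
      obtain ⟨l, hl⟩ : ∃ l, l ∉ ({0, 1, i, k} : Finset (Fin (d + 2))) := by
        by_contra hcon
        push Not at hcon
        have h4 : ({0, 1, i, k} : Finset (Fin (d + 2))).card ≤ 4 := Finset.card_le_four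
        rw [Finset.eq_univ_iff_forall.2 hcon] at h4
        simp at h4
        omega
      simp only [Finset.mem_insert, Finset.mem_singleton, not_or] at hl
      obtain ⟨hl0, hl1, hli, hlk⟩ := hl
      have f0 : ∀ x, flipMap i l x 0 = x 0 := by
        intro x
        rw [flipMap_apply, if_neg (Ne.symm hi0), if_neg (Ne.symm hl0)]
        ring
      have f1 : ∀ x, flipMap i l x 1 = x 1 := by
        intro x
        rw [flipMap_apply, if_neg (Ne.symm hi1), if_neg (Ne.symm hl1)]
        ring
      have hinv : Function.Involutive (flipMap i l) := flipMap_flipMap i l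
      have h := h1 (flipMap i l) hinv.bijective (flipMap_mink i l) (flipMap_det i l)
        (by rw [f0]; simp) (by
          ext x
          constructor
          · rintro ⟨y, hy, rfl⟩
            simpa [WR, f0, f1] using hy
          · intro hx
            refine ⟨flipMap i l x, ?_, flipMap_flipMap i l x⟩
            simpa [WR, f0, f1] using hx) (Pi.single i 1)
      have e : flipMap i l (Pi.single i 1) = - Pi.single i 1 := by
        funext m
        rw [flipMap_apply]
        by_cases hm : m = i
        · subst hm
          simp [Ne.symm hli]
        · simp [hm]
      rw [e, map_neg] at h
      have h' := congrFun h k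
      rw [flipMap_apply, if_neg (Ne.symm hik), if_neg (Ne.symm hlk), Pi.neg_apply] at h'
      linarith
    have comp : ∀ x (i : Fin (d + 2)), (if i = 0 then Q x 0 else - Q x i) =
        - mink x (Q (Pi.single i 1)) := by
      intro x i
      have := hskew x (Pi.single i 1)
      rw [mink_single_right] at this
      simpa using this
    have E0 : Q (Pi.single 0 1) = Pi.single 1 (Q (Pi.single 0 1) 1) := by
      funext m
      by_cases hm0 : m = 0
      · subst hm0; simp [q00]
      by_cases hm1 : m = 1
      · subst hm1; simp
      rw [hj01 0 m (Or.inl rfl) hm0 hm1]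
      simp [hm1]
    have E1 : Q (Pi.single 1 1) = Pi.single 0 (Q (Pi.single 0 1) 1) := by
      funext m
      by_cases hm0 : m = 0
      · subst hm0; simp [q10]
      by_cases hm1 : m = 1
      · subst hm1; simp [q11]
      rw [hj01 1 m (Or.inr rfl) hm0 hm1]
      simp [hm0]
    refine ⟨Q (Pi.single 0 1) 1, ?_, ?_⟩
    · have := h3 (Pi.single 0 1) (by simp) (by rw [mink_single_right]; simp)
      exact le_trans (abs_nonneg _) this
    · intro x
      refine ⟨?_, ?_, ?_⟩
      · have := comp x 0
        rw [E0, mink_single_right, if_pos rfl, if_neg h10] at this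
        linarith
      · have := comp x 1
        rw [E1, mink_single_right, if_pos rfl, if_neg h10] at this
        linarith
      · intro i hi0 hi1
        have := comp x i
        rw [qi i hi0 hi1, if_neg hi0] at this
        simpa [mink] using this
  · rintro ⟨κ, hκ, hQ⟩
    refine ⟨?_, ?_, ?_, ?_⟩
    · intro L hb hL _ h0 hW x
      have := commute_aux Q L κ 1 hQ hb hL h0 (by ring) (by
        intro y
        have h : y ∈ WR ↔ L y ∈ WR := by
          rw [← hb.1.mem_set_image (s := WR), hW]
        simpa [WR] using h) x
      simpa using this
    · intro L hb hL _ h0 hW x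
      have := commute_aux Q L κ (-1) hQ hb hL h0 (by ring) (by
        intro y
        have h : y ∈ WR ↔ - L y ∈ WR := by
          rw [← hb.1.mem_set_image (s := WR), hW]
          rfl
        simpa [WR] using h) x
      simpa using this
    · intro x
      funext i
      obtain ⟨a0, a1, a2⟩ := hQ x
      obtain ⟨b0, b1, b2⟩ := hQ (jrefl x)
      by_cases hi0 : i = 0
      · subst hi0
        simp [jrefl] at b0 ⊢
        rw [a0]
        simp [jrefl, b0]
      by_cases hi1 : i = 1
      · subst hi1
        simp [jrefl] at b1 ⊢
        rw [a1]
        simp [jrefl, b1]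
      rw [a2 i hi0 hi1]
      simp only [jrefl, if_neg hi0, if_neg hi1]
      exact b2 i hi0 hi1
    · intro x hx hm
      obtain ⟨a0, a1, -⟩ := hQ x
      rw [a0, a1, abs_mul, abs_of_nonneg hκ]
      refine mul_le_mul_of_nonneg_left ?_ hκ
      refine abs_le_of_sq_le_sq ?_ hx
      unfold mink at hm
      have : ∑ i ∈ ({0, 1} : Finset (Fin (d + 2))), x i * x i ≤ ∑ i, x i * x i :=
        Finset.sum_le_sum_of_subset_of_nonneg (Finset.subset_univ _)
          fun i _ _ => mul_self_nonneg _
      rw [Finset.sum_pair (Ne.symm h10)] at this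
      nlinarith
end

section
/- Classification of admissible deformation matrices in dimension d = 4: let Q be a linear map of ℝ⁴ that is skew-symmetric with respect to the Minkowski inner product, i.e. ⟨Qx, y⟩ = −⟨x, Qy⟩ for all x, y. Then Q satisfies the three admissibility conditions (i) ΛQΛ⁻¹ = Q for every proper orthochronous Lorentz transformation Λ with Λ(W_R) = W_R, (ii) ΛQΛ⁻¹ = −Q for every proper orthochronous Lorentz transformation Λ with Λ(W_R) = −W_R, and jQj = Q for the reflection j(x) = (−x₀, −x₁, x₂, x₃), and (iii) Q maps the closed forward light cone {x : x₀ ≥ 0 and ⟨x, x⟩ ≥ 0} into the closed right wedge {x : x₁ ≥ |x₀|} — if and only if there exist κ ≥ 0 and κ′ ∈ ℝ such that (Qx)₀ = κ·x₁, (Qx)₁ = κ·x₀, (Qx)₂ = κ′·x₃, and (Qx)₃ = −κ′·x₂, for all x ∈ ℝ⁴. -/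
/-- The Minkowski inner product on four-dimensional Minkowski space. -/
noncomputable def mink4 (x y : Fin 4 → ℝ) : ℝ :=
  x 0 * y 0 - x 1 * y 1 - x 2 * y 2 - x 3 * y 3

/-- The right wedge `W_R = {x : x₁ > |x₀|}` in `ℝ⁴`. -/
def WR4 : Set (Fin 4 → ℝ) := {x | |x 0| < x 1}

/-- The reflection `j(x) = (-x₀, -x₁, x₂, x₃)` about the edge of the right wedge. -/
def jrefl4 (x : Fin 4 → ℝ) : Fin 4 → ℝ :=
  fun i => if i = 0 then -x 0 else if i = 1 then -x 1 else x i

theorem aux_apply (L : (Fin 4 → ℝ) →ₗ[ℝ] (Fin 4 → ℝ)) (x : Fin 4 → ℝ) (i : Fin 4) :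
    L x i = L (Pi.single 0 1) i * x 0 + L (Pi.single 1 1) i * x 1
      + L (Pi.single 2 1) i * x 2 + L (Pi.single 3 1) i * x 3 := by
  have h : x = x 0 • (Pi.single 0 1 : Fin 4 → ℝ) + x 1 • (Pi.single 1 1 : Fin 4 → ℝ)
      + x 2 • (Pi.single 2 1 : Fin 4 → ℝ) + x 3 • (Pi.single 3 1 : Fin 4 → ℝ) := by
    ext j
    fin_cases j <;> simp
  conv_lhs => rw [h]
  simp only [map_add, map_smul, Pi.add_apply, Pi.smul_apply, smul_eq_mul]
  ring

/-- A line staying in the wedge has direction in the edge. -/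
theorem aux_line (a0 a1 b0 b1 : ℝ) (h : ∀ t : ℝ, |a0 + t * b0| < a1 + t * b1) :
    b0 = 0 ∧ b1 = 0 := by
  have h1 : b1 = 0 := by
    by_contra hb
    have h2 := lt_of_le_of_lt (abs_nonneg _) (h (-a1 / b1))
    rw [div_mul_cancel₀ _ hb] at h2
    linarith
  refine ⟨?_, h1⟩
  by_contra hb
  have h2 := lt_of_le_of_lt (le_abs_self _) (h ((a1 - a0) / b0))
  rw [div_mul_cancel₀ _ hb, h1] at h2
  linarith

theorem aux_det (L : (Fin 4 → ℝ) →ₗ[ℝ] (Fin 4 → ℝ))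
    (h02 : L (Pi.single 2 1) 0 = 0) (h03 : L (Pi.single 3 1) 0 = 0)
    (h12 : L (Pi.single 2 1) 1 = 0) (h13 : L (Pi.single 3 1) 1 = 0) :
    LinearMap.det L =
      (L (Pi.single 0 1) 0 * L (Pi.single 1 1) 1 - L (Pi.single 1 1) 0 * L (Pi.single 0 1) 1) *
      (L (Pi.single 2 1) 2 * L (Pi.single 3 1) 3 - L (Pi.single 3 1) 2 * L (Pi.single 2 1) 3) := by
  rw [← LinearMap.det_toMatrix']
  have e : ∀ i j, LinearMap.toMatrix' L i j = L (Pi.single j 1) i := by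
    intro i j
    rw [LinearMap.toMatrix'_apply]
  generalize LinearMap.toMatrix' L = M at e ⊢
  rw [← e, ← e, ← e, ← e, ← e, ← e, ← e, ← e]
  rw [← e] at h02 h03 h12 h13
  simp [Matrix.det_succ_row_zero, Fin.sum_univ_succ, Fin.succAbove]
  simp [show (Fin.succ 2 : Fin 4) = 3 from rfl, show (Fin.castSucc 2 : Fin 4) = 2 from rfl,
    h02, h03, h12, h13]
  ring

set_option maxHeartbeats 1000000 in
theorem aux_main (s : ℝ) (hs : s = 1 ∨ s = -1) (L : (Fin 4 → ℝ) →ₗ[ℝ] (Fin 4 → ℝ))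
    (hL : ∀ x y, mink4 (L x) (L y) = mink4 x y) (hdet : LinearMap.det L = 1)
    (hpos : 0 < L (Pi.single 0 1) 0) (hW : ∀ x ∈ WR4, s • L x ∈ WR4)
    (Q : (Fin 4 → ℝ) →ₗ[ℝ] (Fin 4 → ℝ)) (k k' : ℝ)
    (hQ : ∀ x : Fin 4 → ℝ, Q x 0 = k * x 1 ∧ Q x 1 = k * x 0 ∧
        Q x 2 = k' * x 3 ∧ Q x 3 = -k' * x 2) (x : Fin 4 → ℝ) :
    L (Q x) = s • Q (L x) := by
  have hss : s * s = 1 := by rcases hs with h | h <;> rw [h] <;> norm_num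
  have hs0 : s ≠ 0 := by rintro rfl; norm_num at hss
  have edge : ∀ v : Fin 4 → ℝ, v 0 = 0 → v 1 = 0 → L v 0 = 0 ∧ L v 1 = 0 := by
    intro v h0 h1
    have := aux_line (s * L (Pi.single 1 1) 0) (s * L (Pi.single 1 1) 1)
      (s * L v 0) (s * L v 1) (by
        intro t
        have hm : (Pi.single 1 1 + t • v : Fin 4 → ℝ) ∈ WR4 := by
          simp [WR4, h0, h1]
        have := hW _ hm
        simp only [WR4, Set.mem_setOf_eq, map_add, map_smul, Pi.add_apply, Pi.smul_apply,
          smul_eq_mul] at this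
        convert this using 2 <;> ring)
    simpa [hs0] using this
  obtain ⟨h02, h12⟩ := edge (Pi.single 2 1) (by simp) (by simp)
  obtain ⟨h03, h13⟩ := edge (Pi.single 3 1) (by simp) (by simp)
  have hd := aux_det L h02 h03 h12 h13
  rw [hdet] at hd
  have hw1 : |s * L (Pi.single 1 1) 0| < s * L (Pi.single 1 1) 1 := by
    have := hW (Pi.single 1 1) (by simp [WR4])
    simpa [WR4] using this
  have g00 := hL (Pi.single 0 1) (Pi.single 0 1)
  have g01 := hL (Pi.single 0 1) (Pi.single 1 1)
  have g02 := hL (Pi.single 0 1) (Pi.single 2 1)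
  have g03 := hL (Pi.single 0 1) (Pi.single 3 1)
  have g11 := hL (Pi.single 1 1) (Pi.single 1 1)
  have g12 := hL (Pi.single 1 1) (Pi.single 2 1)
  have g13 := hL (Pi.single 1 1) (Pi.single 3 1)
  have g22 := hL (Pi.single 2 1) (Pi.single 2 1)
  have g23 := hL (Pi.single 2 1) (Pi.single 3 1)
  have g33 := hL (Pi.single 3 1) (Pi.single 3 1)
  simp [mink4, h02, h03, h12, h13] at g00 g01 g02 g03 g11 g12 g13 g22 g23 g33
  have ap := aux_apply L
  obtain ⟨q0, q1, q2, q3⟩ := hQ x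
  obtain ⟨r0, r1, r2, r3⟩ := hQ (L x)
  have fin : ∀ i, L (Q x) i = s * Q (L x) i := by
    have apQ := ap (Q x)
    have apx := ap x
    simp only [q0, q1, q2, q3] at apQ
    have A0 := apQ 0
    have A1 := apQ 1
    have A2 := apQ 2
    have A3 := apQ 3
    have B0 := apx 0
    have B1 := apx 1
    have B2 := apx 2
    have B3 := apx 3
    rw [h02, h03] at A0 B0
    rw [h12, h13] at A1 B1
    rw [B1] at r0
    rw [B0] at r1
    rw [B3] at r2
    rw [B2] at r3
    clear ap apQ apx B0 B1 B2 B3 q0 q1 q2 q3 hQ hL hW edge hdet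
    generalize L (Pi.single 0 1) 0 = a00 at *
    generalize L (Pi.single 0 1) 1 = a10 at *
    generalize L (Pi.single 0 1) 2 = c20 at *
    generalize L (Pi.single 0 1) 3 = c30 at *
    generalize L (Pi.single 1 1) 0 = a01 at *
    generalize L (Pi.single 1 1) 1 = a11 at *
    generalize L (Pi.single 1 1) 2 = c21 at *
    generalize L (Pi.single 1 1) 3 = c31 at *
    generalize L (Pi.single 2 1) 2 = d22 at *
    generalize L (Pi.single 2 1) 3 = d32 at *
    generalize L (Pi.single 3 1) 2 = d23 at *
    generalize L (Pi.single 3 1) 3 = d33 at *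
    have hne : d22 * d33 - d23 * d32 ≠ 0 := by
      intro h; rw [h] at hd; simp at hd
    have c20z : c20 = 0 := by
      have : c20 * (d22 * d33 - d23 * d32) = 0 := by linear_combination (-d33) * g02 + d32 * g03
      simpa [hne] using this
    have c30z : c30 = 0 := by
      have : c30 * (d22 * d33 - d23 * d32) = 0 := by linear_combination (-d22) * g03 + d23 * g02
      simpa [hne] using this
    have c21z : c21 = 0 := by
      have : c21 * (d22 * d33 - d23 * d32) = 0 := by linear_combination (-d33) * g12 + d32 * g13
      simpa [hne] using this
    have c31z : c31 = 0 := by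
      have : c31 * (d22 * d33 - d23 * d32) = 0 := by linear_combination (-d22) * g13 + d23 * g12
      simpa [hne] using this
    subst c20z c30z c21z c31z
    have p0 : a00 * a00 - a10 * a10 = 1 := by linarith
    have p1 : a11 * a11 - a01 * a01 = 1 := by linarith
    have p01 : a00 * a01 = a10 * a11 := by linarith
    have d2 : d22 * d22 + d32 * d32 = 1 := by linarith
    have d3 : d23 * d23 + d33 * d33 = 1 := by linarith
    have d23' : d22 * d23 + d32 * d33 = 0 := by linarith
    have hsq : (a00 * a11 - a01 * a10) ^ 2 = 1 := by
      linear_combination (a11 * a11 - a01 * a01) * p0 + p1 +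
        (a00 * a01 - a10 * a11) * p01
    have k1 : 0 < s * (a00 * a11 - a01 * a10) := by
      have h1 : |a10| < a00 := abs_lt_of_sq_lt_sq (by linarith [pow_two a10, pow_two a00]) hpos.le
      have h2 : |s * a01| * |a10| < s * a11 * a00 :=
        mul_lt_mul'' hw1 h1 (abs_nonneg _) (abs_nonneg _)
      rw [← abs_mul] at h2
      have := le_abs_self (s * a01 * a10)
      linarith
    have hA : a00 * a11 - a01 * a10 = s := by
      have h1 : (s * (a00 * a11 - a01 * a10)) ^ 2 = 1 := by
        rw [mul_pow, hsq, pow_two, hss, one_mul]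
      have h2 : s * (a00 * a11 - a01 * a10) = 1 := (pow_eq_one_iff_of_nonneg k1.le two_ne_zero).mp h1
      linear_combination s * h2 - (a00 * a11 - a01 * a10) * hss
    have hD : d22 * d33 - d23 * d32 = s := by
      rw [hA] at hd
      linear_combination (-s) * hd - (d22 * d33 - d23 * d32) * hss
    have e1 : a00 = s * a11 := by
      linear_combination (-a00) * p1 + a11 * hA - a01 * p01
    have e2 : a10 = s * a01 := by
      linear_combination (-a10) * p1 + a01 * hA - a11 * p01
    have e3 : d22 = s * d33 := by
      linear_combination (-d22) * d3 + d33 * hD + d23 * d23'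
    have e4 : d32 = -s * d23 := by
      linear_combination (-d32) * d3 - d23 * hD + d33 * d23'
    intro i
    fin_cases i
    · simp only [Fin.zero_eta, A0, r0]
      rw [e1, e2]
      linear_combination (-k * a01 * x 0) * hss
    · simp only [Fin.mk_one, A1, r1]
      rw [e1, e2]
      linear_combination (-k * a11 * x 0) * hss
    · simp only [Fin.reduceFinMk, A2, r2]
      rw [e3, e4]
      linear_combination (k' * d23 * x 2) * hss
    · simp only [Fin.reduceFinMk, A3, r3]
      rw [e3, e4]
      linear_combination (k' * d33 * x 2) * hss
  ext i
  simpa using fin i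

/-- classification of admissible deformation matrices in dimension `d = 4`:
a Minkowski-skew-symmetric linear map `Q` of `ℝ⁴` satisfies the admissibility conditions
(i) `ΛQΛ⁻¹ = Q` for proper orthochronous `Λ` with `Λ(W_R) = W_R`, (ii) `ΛQΛ⁻¹ = -Q` for
proper orthochronous `Λ` with `Λ(W_R) = -W_R` and `jQj = Q`, (iii) `Q` maps the closed
forward light cone into the closed right wedge — if and only if there are `κ ≥ 0`, `κ' ∈ ℝ`
with `Qx = (κ x₁, κ x₀, κ' x₃, -κ' x₂)`. -/
theorem admissible_Q_classification_dim4
    (Q : (Fin 4 → ℝ) →ₗ[ℝ] (Fin 4 → ℝ))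
    (hskew : ∀ x y, mink4 (Q x) y = - mink4 x (Q y)) :
    ((∀ Λ : (Fin 4 → ℝ) →ₗ[ℝ] (Fin 4 → ℝ),
        Function.Bijective Λ → (∀ x y, mink4 (Λ x) (Λ y) = mink4 x y) →
        LinearMap.det Λ = 1 → 0 < Λ (Pi.single 0 1) 0 →
        (⇑Λ) '' WR4 = WR4 → ∀ x, Λ (Q x) = Q (Λ x)) ∧
     (∀ Λ : (Fin 4 → ℝ) →ₗ[ℝ] (Fin 4 → ℝ),
        Function.Bijective Λ → (∀ x y, mink4 (Λ x) (Λ y) = mink4 x y) →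
        LinearMap.det Λ = 1 → 0 < Λ (Pi.single 0 1) 0 →
        (⇑Λ) '' WR4 = {x | -x ∈ WR4} → ∀ x, Λ (Q x) = - Q (Λ x)) ∧
     (∀ x, jrefl4 (Q (jrefl4 x)) = Q x) ∧
     (∀ x : Fin 4 → ℝ, 0 ≤ x 0 → 0 ≤ mink4 x x → |Q x 0| ≤ Q x 1))
    ↔ (∃ κ κ' : ℝ, 0 ≤ κ ∧ ∀ x : Fin 4 → ℝ,
        Q x 0 = κ * x 1 ∧ Q x 1 = κ * x 0 ∧
        Q x 2 = κ' * x 3 ∧ Q x 3 = -κ' * x 2) := by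
  constructor
  · rintro ⟨-, -, hj, hc⟩
    have ap := aux_apply Q
    have z : ∀ a b : Fin 4, (a = 0 ∨ a = 1) → (b = 2 ∨ b = 3) →
        Q (Pi.single a 1) b = 0 ∧ Q (Pi.single b 1) a = 0 := by
      intro a b ha hb
      have j1 : jrefl4 (Pi.single a 1) = -Pi.single a 1 := by
        ext i
        rcases ha with rfl | rfl <;> fin_cases i <;> simp [jrefl4]
      have j2 : jrefl4 (Pi.single b 1) = Pi.single b 1 := by
        ext i
        rcases hb with rfl | rfl <;> fin_cases i <;> simp [jrefl4]
      have h1 := congrFun (hj (Pi.single a 1)) b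
      have h2 := congrFun (hj (Pi.single b 1)) a
      rw [j1] at h1
      rw [j2] at h2
      constructor
      · rcases hb with rfl | rfl <;> simp [jrefl4] at h1 <;> linarith
      · rcases ha with rfl | rfl <;> simp [jrefl4] at h2 <;> linarith
    obtain ⟨z1, z2⟩ := z 0 2 (by simp) (by simp)
    obtain ⟨z3, z4⟩ := z 0 3 (by simp) (by simp)
    obtain ⟨z5, z6⟩ := z 1 2 (by simp) (by simp)
    obtain ⟨z7, z8⟩ := z 1 3 (by simp) (by simp)
    have s00 := hskew (Pi.single 0 1) (Pi.single 0 1)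
    have s11 := hskew (Pi.single 1 1) (Pi.single 1 1)
    have s22 := hskew (Pi.single 2 1) (Pi.single 2 1)
    have s33 := hskew (Pi.single 3 1) (Pi.single 3 1)
    have s01 := hskew (Pi.single 0 1) (Pi.single 1 1)
    have s23 := hskew (Pi.single 2 1) (Pi.single 3 1)
    simp [mink4] at s00 s11 s22 s33 s01 s23
    have t00 : Q (Pi.single 0 1) 0 = 0 := by linarith
    have t11 : Q (Pi.single 1 1) 1 = 0 := by linarith
    have t22 : Q (Pi.single 2 1) 2 = 0 := by linarith
    have t33 : Q (Pi.single 3 1) 3 = 0 := by linarith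
    have t01 : Q (Pi.single 1 1) 0 = Q (Pi.single 0 1) 1 := by linarith
    have t23 : Q (Pi.single 2 1) 3 = -Q (Pi.single 3 1) 2 := by linarith
    refine ⟨Q (Pi.single 0 1) 1, Q (Pi.single 3 1) 2, ?_, ?_⟩
    · exact (abs_nonneg _).trans (hc (Pi.single 0 1) (by simp) (by simp [mink4]))
    · intro x
      refine ⟨?_, ?_, ?_, ?_⟩
      · rw [ap x 0, t00, t01, z2, z4]; ring
      · rw [ap x 1, t11, z6, z8]; ring
      · rw [ap x 2, t22, z1, z5]; ring
      · rw [ap x 3, t33, t23, z3, z7]; ring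
  · rintro ⟨k, k', hk, hQ⟩
    refine ⟨?_, ?_, ?_, ?_⟩
    · intro L _ hL hd hp hW x
      have := aux_main 1 (Or.inl rfl) L hL hd hp (by
        intro y hy
        rw [one_smul, ← hW]
        exact ⟨y, hy, rfl⟩) Q k k' hQ x
      simpa using this
    · intro L _ hL hd hp hW x
      have := aux_main (-1) (Or.inr rfl) L hL hd hp (by
        intro y hy
        have h : L y ∈ {x | -x ∈ WR4} := by
          rw [← hW]
          exact ⟨y, hy, rfl⟩
        simpa using h) Q k k' hQ x
      simpa using this
    · intro x
      obtain ⟨q0, q1, q2, q3⟩ := hQ x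
      obtain ⟨r0, r1, r2, r3⟩ := hQ (jrefl4 x)
      ext i
      fin_cases i
      · simp [jrefl4] at r0 ⊢
        rw [q0]
        simp [jrefl4, r0]
      · simp [jrefl4] at r1 ⊢
        rw [q1]
        simp [jrefl4, r1]
      · simp [jrefl4] at r2 ⊢
        rw [q2]
        simp [jrefl4, r2]
      · simp [jrefl4] at r3 ⊢
        rw [q3]
        simp [jrefl4, r3]
    · intro x h0 hx
      obtain ⟨q0, q1, -, -⟩ := hQ x
      rw [q0, q1, abs_mul, abs_of_nonneg hk]
      refine mul_le_mul_of_nonneg_left (abs_le_of_sq_le_sq ?_ h0) hk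
      simp only [mink4] at hx
      nlinarith [sq_nonneg (x 2), sq_nonneg (x 3)]
end
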